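/- arXiv:2605.08935 — 2 statements merged into one kernel-verified Lean document; each statement's English description precedes it below -/
import Mathlib

section
/- Let E be a normed vector space, F : E → E Lipschitz with constant L_F ≥ 0, C : E → E Lipschitz with constant L_C ≥ 0 with λ := L_C · L_F < 1, x : ℕ → E a trajectory satisfying ‖C(F(x t)) − x (t+1)‖ ≤ ε_corr for all t, and x̃ : ℕ → E the corrected rollout x̃ (t+1) = C (F (x̃ t)) with arbitrary initial error ‖x̃ 0 − x 0‖. Then limsup_{T → ∞} ‖x̃ T − x T‖ ≤ ε_corr / (1 − λ): the influence of the initial error λ^T · ‖x̃ 0 − x 0‖ vanishes and the asymptotic error is bounded by ε_corr / (1 − λ). -/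
/-- Asymptotic PnP-Corrector bound: with contraction `λ = L_C * L_F < 1`
and arbitrary initial error, the influence of the initial error vanishes
and `limsup_{T → ∞} ‖xtil T - x T‖ ≤ ε_corr / (1 - λ)`. -/
theorem pnp_corrector_limsup_bound
    {E : Type*} [NormedAddCommGroup E] [NormedSpace ℝ E]
    (F C : E → E) (L_F L_C : ℝ) (hLF : 0 ≤ L_F) (hLC : 0 ≤ L_C)
    (hcontr : L_C * L_F < 1)
    (hLipF : ∀ a b : E, ‖F a - F b‖ ≤ L_F * ‖a - b‖)
    (hLipC : ∀ a b : E, ‖C a - C b‖ ≤ L_C * ‖a - b‖)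
    (x : ℕ → E) (ε_corr : ℝ) (hε : 0 ≤ ε_corr)
    (hcorr : ∀ t : ℕ, ‖C (F (x t)) - x (t + 1)‖ ≤ ε_corr)
    (xtil : ℕ → E) (hroll : ∀ t : ℕ, xtil (t + 1) = C (F (xtil t))) :
    Filter.limsup (fun T : ℕ => ‖xtil T - x T‖) Filter.atTop
      ≤ ε_corr / (1 - L_C * L_F) := by
  have h0 : 0 ≤ L_C * L_F := mul_nonneg hLC hLF
  have h1 : 0 < 1 - L_C * L_F := by linarith
  have hB : 0 ≤ ε_corr / (1 - L_C * L_F) := div_nonneg hε h1.le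
  have hBeq : L_C * L_F * (ε_corr / (1 - L_C * L_F)) + ε_corr = ε_corr / (1 - L_C * L_F) := by
    field_simp
    ring
  have hbound : ∀ T : ℕ, ‖xtil T - x T‖ ≤
      (L_C * L_F) ^ T * ‖xtil 0 - x 0‖ + ε_corr / (1 - L_C * L_F) := by
    intro T
    induction T with
    | zero => simpa using hB
    | succ t ih =>
      have e1 : ‖xtil (t + 1) - x (t + 1)‖ ≤
          ‖C (F (xtil t)) - C (F (x t))‖ + ‖C (F (x t)) - x (t + 1)‖ := by
        rw [hroll]
        exact norm_sub_le_norm_sub_add_norm_sub _ _ _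
      have e2 : ‖C (F (xtil t)) - C (F (x t))‖ ≤ L_C * (L_F * ‖xtil t - x t‖) :=
        (hLipC _ _).trans (mul_le_mul_of_nonneg_left (hLipF _ _) hLC)
      have e3 := mul_le_mul_of_nonneg_left ih h0
      have e4 := hcorr t
      rw [pow_succ]
      linarith
  have hlim : Filter.Tendsto (fun T : ℕ => (L_C * L_F) ^ T * ‖xtil 0 - x 0‖
      + ε_corr / (1 - L_C * L_F)) Filter.atTop (nhds (ε_corr / (1 - L_C * L_F))) := by
    simpa using ((tendsto_pow_atTop_nhds_zero_of_lt_one h0 hcontr).mul_const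
      ‖xtil 0 - x 0‖).add_const (ε_corr / (1 - L_C * L_F))
  rw [← hlim.limsup_eq]
  refine Filter.limsup_le_limsup (Filter.Eventually.of_forall hbound) ?_ hlim.isBoundedUnder_le
  exact Filter.IsCoboundedUnder.of_frequently_ge (a := 0)
    (Filter.Frequently.of_forall fun T => norm_nonneg _)
end

section
/- Let E be a normed vector space, F : E → E Lipschitz with constant L_F ≥ 0, C : E → E Lipschitz with constant L_C ≥ 0 with λ := L_C · L_F < 1, x : ℕ → E a trajectory satisfying ‖C(F(x t)) − x (t+1)‖ ≤ ε_corr for all t, and x̃ : ℕ → E the corrected rollout x̃ (t+1) = C (F (x̃ t)). Then for every T ∈ ℕ, ‖x̃ T − x T‖ ≤ λ^T · ‖x̃ 0 − x 0‖ + ε_corr / (1 − λ); in particular, if the ground-truth trajectory x is bounded, the corrected rollout x̃ is also a bounded sequence in E. -/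
/-- PnP-Corrector stability: with contraction `λ = L_C * L_F < 1`, the
corrected rollout error satisfies
`‖xtil T - x T‖ ≤ λ^T * ‖xtil 0 - x 0‖ + ε_corr / (1 - λ)` for every `T`;
in particular, if the ground truth `x` is bounded then the corrected
rollout `xtil` is a bounded sequence. -/
theorem pnp_corrector_bounded_stability
    {E : Type*} [NormedAddCommGroup E] [NormedSpace ℝ E]
    (F C : E → E) (L_F L_C : ℝ) (hLF : 0 ≤ L_F) (hLC : 0 ≤ L_C)
    (hcontr : L_C * L_F < 1)
    (hLipF : ∀ a b : E, ‖F a - F b‖ ≤ L_F * ‖a - b‖)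
    (hLipC : ∀ a b : E, ‖C a - C b‖ ≤ L_C * ‖a - b‖)
    (x : ℕ → E) (ε_corr : ℝ) (hε : 0 ≤ ε_corr)
    (hcorr : ∀ t : ℕ, ‖C (F (x t)) - x (t + 1)‖ ≤ ε_corr)
    (xtil : ℕ → E) (hroll : ∀ t : ℕ, xtil (t + 1) = C (F (xtil t))) :
    (∀ T : ℕ, ‖xtil T - x T‖ ≤
        (L_C * L_F) ^ T * ‖xtil 0 - x 0‖ + ε_corr / (1 - L_C * L_F)) ∧
    ((∃ M : ℝ, ∀ t : ℕ, ‖x t‖ ≤ M) → ∃ M : ℝ, ∀ t : ℕ, ‖xtil t‖ ≤ M) := by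
  have h1 : 0 < 1 - L_C * L_F := by linarith
  have h0 : 0 ≤ L_C * L_F := mul_nonneg hLC hLF
  have key : ∀ T : ℕ, ‖xtil T - x T‖ ≤
        (L_C * L_F) ^ T * ‖xtil 0 - x 0‖ + ε_corr / (1 - L_C * L_F) := by
    intro T
    induction T with
    | zero =>
      have : 0 ≤ ε_corr / (1 - L_C * L_F) := div_nonneg hε h1.le
      simpa using this
    | succ t ih =>
      have e : L_C * L_F * (ε_corr / (1 - L_C * L_F)) + ε_corr
          = ε_corr / (1 - L_C * L_F) := by
        have := h1.ne'
        field_simp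
        ring
      calc ‖xtil (t + 1) - x (t + 1)‖
          = ‖(C (F (xtil t)) - C (F (x t))) + (C (F (x t)) - x (t + 1))‖ := by
            rw [hroll, sub_add_sub_cancel]
        _ ≤ ‖C (F (xtil t)) - C (F (x t))‖ + ‖C (F (x t)) - x (t + 1)‖ := norm_add_le _ _
        _ ≤ L_C * (L_F * ‖xtil t - x t‖) + ε_corr :=
            add_le_add ((hLipC _ _).trans (mul_le_mul_of_nonneg_left (hLipF _ _) hLC)) (hcorr t)
        _ = (L_C * L_F) * ‖xtil t - x t‖ + ε_corr := by ring
        _ ≤ (L_C * L_F) * ((L_C * L_F) ^ t * ‖xtil 0 - x 0‖ + ε_corr / (1 - L_C * L_F))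
              + ε_corr := by
            have := mul_le_mul_of_nonneg_left ih h0
            linarith
        _ = (L_C * L_F) ^ (t + 1) * ‖xtil 0 - x 0‖
              + (L_C * L_F * (ε_corr / (1 - L_C * L_F)) + ε_corr) := by ring
        _ = _ := by rw [e]
  refine ⟨key, ?_⟩
  rintro ⟨M, hM⟩
  refine ⟨‖xtil 0 - x 0‖ + ε_corr / (1 - L_C * L_F) + M, fun t => ?_⟩
  have a := key t
  have b : (L_C * L_F) ^ t * ‖xtil 0 - x 0‖ ≤ ‖xtil 0 - x 0‖ :=
    mul_le_of_le_one_left (norm_nonneg _) (pow_le_one₀ h0 hcontr.le)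
  have c : ‖xtil t‖ ≤ ‖xtil t - x t‖ + ‖x t‖ := by
    simpa using norm_add_le (xtil t - x t) (x t)
  have d := hM t
  linarith
end
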